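/- For every n ≥ 1, the polynomial Ψ_{C_n}(t), viewed as a polynomial with real coefficients, has only real roots (i.e., it splits over ℝ; every complex root of Ψ_{C_n} is real). -/

import Mathlib

/-!
Write `Ψ_m` for `PsiC m`. An element of `X_{m+1}` is obtained in a unique way from an element of
`X_m` by inserting one of the letters `±(m + 1)` at one of `m + 1` positions (`cyc_inj`,
`exists_cyc`). Closing up the word `w_1 ⋯ w_m` to the circular word `w_1 ⋯ w_m (-w_m) ⋯ (-w_1)`,
the number `basc w` counts the big ascents among the gaps `0, …, m` (`basc_eq_sum`). Inserting
`±(m + 1)` into a gap destroys the big ascent there, if there is one, and creates exactly one,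
except for a single insertion that creates none: `m + 1` right behind `m`, or `-(m + 1)` right
before `-m` (`basc_mul_cyc`, `exists_exc`). So a `w` with `k` big ascents contributes
`(2k + 1) t^k + (2(m - k) + 1) t^(k+1)`, and summation over `w` gives (`PsiC_succ`)
`Ψ_{m+1} = (1 + (2m + 1) t) Ψ_m + 2 t (1 - t) Ψ_m'`.

Suppose that all roots `r` of `Ψ_m` are real and at most `1`, and let `z` be a non-real root of
`Ψ_{m+1}`. Dividing the recurrence by `2 z Ψ_m(z)` and expanding the logarithmic derivative of
`Ψ_m` gives
`∑_r (1 - r) / (z - r) + 1 / (2z) + (m + 1/2 - #roots) = 0`.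
The last term is real, and every other term has an imaginary part of sign opposite to that of
`Im z` (or zero), strictly so for `1 / (2z)`: a contradiction. So the roots of `Ψ_{m+1}` are real,
and none is positive because the coefficients are nonnegative (`PsiC_pos`).
-/

open scoped Classical

/-- A signed permutation of length `n`: a permutation `w` of `ℤ` with
`w(-i) = -w(i)` that fixes every integer of absolute value greater than `n`. -/
def IsSignedPerm (n : ℕ) (w : Equiv.Perm ℤ) : Prop :=
  (∀ i : ℤ, w (-i) = - w i) ∧ ∀ i : ℤ, (n : ℤ) < |i| → w i = i

/-- Membership in `X_n := {w ∈ 𝔅_n : w⁻¹(1) > 0}`. -/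
def InXn (n : ℕ) (w : Equiv.Perm ℤ) : Prop :=
  IsSignedPerm n w ∧ 0 < w.symm 1

/-- The type B descent number `des_B(w) = #{i ∈ {0,…,n-1} : w_i > w_{i+1}}`,
with the convention `w_0 = 0` (automatic, since a signed permutation fixes `0`). -/
noncomputable def desB (n : ℕ) (w : Equiv.Perm ℤ) : ℕ :=
  ((Finset.range n).filter fun i => w ((i : ℤ) + 1) < w (i : ℤ)).card

/-- The flag-excedance `fexc(w) = 2·#{i : w_i > i} + #{i : w_i < 0}`. -/
noncomputable def fexc (n : ℕ) (w : Equiv.Perm ℤ) : ℕ :=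
  2 * ((Finset.Icc (1 : ℤ) (n : ℤ)).filter fun i => i < w i).card
    + ((Finset.Icc (1 : ℤ) (n : ℤ)).filter fun i => w i < 0).card

/-- The cyclic successor on `{-n,…,-1,1,…,n}` (with `(-1)⁺ = 1` and `n⁺ = -n`). -/
def csucc (n : ℕ) (i : ℤ) : ℤ :=
  if i = -1 then 1 else if i = (n : ℤ) then -(n : ℤ) else i + 1

/-- The circular descent set `CDes(w) = {i ∈ {-n,…,-1,1,…,n} : w(i) > w(i⁺)}`. -/
noncomputable def cdesSet (n : ℕ) (w : Equiv.Perm ℤ) : Finset ℤ :=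
  (Finset.Icc (-(n : ℤ)) (n : ℤ)).filter fun i => i ≠ 0 ∧ w (csucc n i) < w i

/-- The circular descent number `cdes(w) = |CDes(w)|`. -/
noncomputable def cdes (n : ℕ) (w : Equiv.Perm ℤ) : ℕ := (cdesSet n w).card

/-- `a ≪ b`: there is a nonzero integer strictly between `a` and `b`. -/
def Lll (a b : ℤ) : Prop := ∃ c : ℤ, c ≠ 0 ∧ a < c ∧ c < b

/-- The big ascent number `basc(w) = |BAsc(w)|`, where `BAsc(w) ⊆ {-1,1,…,n}`:
`-1 ∈ BAsc(w)` iff `w_1 ≥ 2`; for `1 ≤ i ≤ n-1`, `i ∈ BAsc(w)` iff `w_i ≪ w_{i+1}`;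
and `n ∈ BAsc(w)` iff `w_n ≤ -2`. -/
noncomputable def basc (n : ℕ) (w : Equiv.Perm ℤ) : ℕ :=
  ((insert (-1 : ℤ) (Finset.Icc (1 : ℤ) (n : ℤ))).filter fun i =>
    if i = -1 then 2 ≤ w 1
    else if i = (n : ℤ) then w (n : ℤ) ≤ -2
    else Lll (w i) (w (i + 1))).card

/-- `L'_{n,k}(r)`: the number of half-integer points in the `r`-th dilate of the
half-open type C hypersimplex `Δ'_{C_n,k}`, in the `y`-coordinates. -/
noncomputable def Lp (n k r : ℕ) : ℕ :=
  if k = 1 then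
    Set.ncard {y : Fin n → ℤ |
      (∀ j, 0 ≤ y j ∧ y j ≤ 2 * (r : ℤ)) ∧ (∀ j : Fin n, (j : ℕ) = 0 → y j ≤ (r : ℤ)) ∧
      0 ≤ ∑ j, y j ∧ ∑ j, y j ≤ (r : ℤ)}
  else
    Set.ncard {y : Fin n → ℤ |
      (∀ j, 0 ≤ y j ∧ y j ≤ 2 * (r : ℤ)) ∧ (∀ j : Fin n, (j : ℕ) = 0 → y j ≤ (r : ℤ)) ∧
      ((k : ℤ) - 1) * r < ∑ j, y j ∧ ∑ j, y j ≤ (k : ℤ) * r}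

/-- `L_{n,k}(r)`: the number of half-integer points in the `r`-th dilate of the
closed type C hypersimplex `Δ_{C_n,k}`, in the `y`-coordinates. -/
noncomputable def Lc (n k r : ℕ) : ℕ :=
  Set.ncard {y : Fin n → ℤ |
    (∀ j, 0 ≤ y j ∧ y j ≤ 2 * (r : ℤ)) ∧ (∀ j : Fin n, (j : ℕ) = 0 → y j ≤ (r : ℤ)) ∧
    ((k : ℤ) - 1) * r ≤ ∑ j, y j ∧ ∑ j, y j ≤ (k : ℤ) * r}

/-- `ψ_{n,k} = #{w ∈ X_n : basc(w) = k}`. -/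
noncomputable def psiN (n k : ℕ) : ℕ :=
  {w : Equiv.Perm ℤ | InXn n w ∧ basc n w = k}.ncard

/-- `ψ_{n,k}` with an integer index (`0` for negative `k`). -/
noncomputable def psiZ (n : ℕ) (k : ℤ) : ℕ :=
  {w : Equiv.Perm ℤ | InXn n w ∧ (basc n w : ℤ) = k}.ncard

/-- `Ψ_{C_n}(t) = Σ_k ψ_{n,k} t^k ∈ ℤ[t]`. -/
noncomputable def PsiC (n : ℕ) : Polynomial ℤ :=
  ∑ᶠ k : ℕ, (psiN n k : Polynomial ℤ) * Polynomial.X ^ k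

/-- `Ψ_{C_n}(t)` with rational coefficients. -/
noncomputable def PsiCQ (n : ℕ) : Polynomial ℚ :=
  ∑ᶠ k : ℕ, (psiN n k : Polynomial ℚ) * Polynomial.X ^ k

/-- The descent number of a permutation of `{1,…,m}`. -/
noncomputable def desA (m : ℕ) (σ : Equiv.Perm (Fin m)) : ℕ :=
  (Finset.univ.filter fun i : Fin m =>
    ∃ h : (i : ℕ) + 1 < m, σ ⟨(i : ℕ) + 1, h⟩ < σ i).card

/-- The classical (type A) Eulerian polynomial `E_m^A(t) = Σ_{σ ∈ S_m} t^{des σ}`. -/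
noncomputable def EulerianA (m : ℕ) : Polynomial ℚ :=
  ∑ σ : Equiv.Perm (Fin m), Polynomial.X ^ desA m σ

/-- The relation `u ⇀ w` on `X_n`. -/
def covRel (n : ℕ) (u w : Equiv.Perm ℤ) : Prop :=
  InXn n u ∧ InXn n w ∧
    ((2 ≤ w 1 ∧ u = w * Equiv.swap (1 : ℤ) (-1)) ∨
     (∃ i : ℤ, 1 ≤ i ∧ i ≤ (n : ℤ) - 1 ∧ Lll (w i) (w (i + 1)) ∧
        u = w * (Equiv.swap i (i + 1) * Equiv.swap (-i) (-(i + 1)))) ∨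
     (w (n : ℤ) ≤ -2 ∧ u = w * Equiv.swap (n : ℤ) (-(n : ℤ))))

/-- The `i`-th coordinate (`1 ≤ i ≤ n`) of the vertex `v^j(w)` (`1 ≤ j ≤ n+1`):
`v^{n+1}_i(w) = #({1,…,i-1} ∩ CDes(w⁻¹))` and `v^j = v^{j+1} + ½ e_{w_j}`. -/
noncomputable def vcoord (n : ℕ) (w : Equiv.Perm ℤ) (j : ℕ) (i : ℕ) : ℚ :=
  ((Finset.Icc (1 : ℤ) ((i : ℤ) - 1) ∩ cdesSet n w.symm).card : ℚ)
    + (1 / 2) * ∑ m ∈ Finset.Icc (j : ℤ) (n : ℤ),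
        (if w m = (i : ℤ) then (1 : ℚ) else if w m = -(i : ℤ) then -1 else 0)

/-- `u` is the image `τ_n(w)`: in window notation `u = 1 w'_1 ⋯ w'_n`, where
`w'_i = w_i + 1` if `w_i > 0` and `w'_i = w_i - 1` if `w_i < 0`. -/
def isTau (n : ℕ) (w u : Equiv.Perm ℤ) : Prop :=
  u 1 = 1 ∧ ∀ i : ℤ, 1 ≤ i → i ≤ (n : ℤ) →
    u (i + 1) = if 0 < w i then w i + 1 else w i - 1

/-! ### Signed permutations -/

lemma lll_iff (a b : ℤ) : Lll a b ↔ a + 2 ≤ b ∧ ¬ (a = -1 ∧ b = 1) := by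
  constructor
  · rintro ⟨c, h0, h1, h2⟩
    omega
  · rintro ⟨h1, h2⟩
    by_cases h : a = -1
    · exact ⟨b - 1, by omega, by omega, by omega⟩
    · exact ⟨a + 1, by omega, by omega, by omega⟩

lemma IsSignedPerm.symm_neg {n : ℕ} {w : Equiv.Perm ℤ} (h : IsSignedPerm n w) (i : ℤ) :
    w.symm (-i) = - w.symm i := by
  rw [Equiv.symm_apply_eq, h.1, Equiv.apply_symm_apply]

lemma IsSignedPerm.zero {n : ℕ} {w : Equiv.Perm ℤ} (h : IsSignedPerm n w) : w 0 = 0 := by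
  have := h.1 0
  simp only [neg_zero] at this
  omega

lemma IsSignedPerm.symm {n : ℕ} {w : Equiv.Perm ℤ} (h : IsSignedPerm n w) :
    IsSignedPerm n w.symm := by
  refine ⟨h.symm_neg, fun i hi => ?_⟩
  rw [Equiv.symm_apply_eq, h.2 i hi]

lemma IsSignedPerm.abs_le {n : ℕ} {w : Equiv.Perm ℤ} (h : IsSignedPerm n w) {i : ℤ}
    (hi : |i| ≤ n) : |w i| ≤ n := by
  by_contra hc
  have h1 := h.symm.2 (w i) (by omega)
  rw [Equiv.symm_apply_apply] at h1
  rw [← h1] at hc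
  exact hc hi

lemma IsSignedPerm.ne_zero {n : ℕ} {w : Equiv.Perm ℤ} (h : IsSignedPerm n w) {i : ℤ}
    (hi : i ≠ 0) : w i ≠ 0 := by
  intro hc
  apply hi
  apply w.injective
  rw [hc, h.zero]

lemma InXn.symm_one_ne {n : ℕ} {w : Equiv.Perm ℤ} (h : InXn n w) (hn : 1 ≤ n) :
    w.symm 1 ≤ n := by
  have h1 := h.1.symm.abs_le (i := 1) (by simpa using hn)
  exact (abs_le.mp h1).2

/-! ### Removing and inserting the largest letter -/

/-- Insertion of a new letter of absolute value `m + 1`: right multiplication by `cyc m a s`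
puts the letter `m + 1` (if `s`) or `-(m + 1)` (otherwise) of a signed permutation of length `m`
at position `a + 1` and shifts the letters behind it by one position. -/
def cyc (m : ℕ) (a : Fin (m + 1)) (s : Bool) : Equiv.Perm ℤ where
  toFun i :=
    if i = (a : ℕ) + 1 then (if s then (m : ℤ) + 1 else -(m + 1))
    else if i = -((a : ℕ) + 1 : ℤ) then (if s then -((m : ℤ) + 1) else m + 1)
    else if (a : ℕ) + 1 < i ∧ i ≤ m + 1 then i - 1
    else if i < -((a : ℕ) + 1 : ℤ) ∧ -((m : ℤ) + 1) ≤ i then i + 1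
    else i
  invFun i :=
    if i = (m : ℤ) + 1 then (if s then ((a : ℕ) : ℤ) + 1 else -((a : ℕ) + 1))
    else if i = -((m : ℤ) + 1) then (if s then -(((a : ℕ) : ℤ) + 1) else (a : ℕ) + 1)
    else if ((a : ℕ) : ℤ) + 1 ≤ i ∧ i < m + 1 then i + 1
    else if i ≤ -((a : ℕ) + 1 : ℤ) ∧ -((m : ℤ) + 1) < i then i - 1
    else i
  left_inv i := by
    have := a.2
    cases s <;> simp only [Bool.false_eq_true, if_true, if_false] <;> split_ifs <;> omega
  right_inv i := by
    have := a.2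
    cases s <;> simp only [Bool.false_eq_true, if_true, if_false] <;> split_ifs <;> omega

lemma cyc_apply (m : ℕ) (a : Fin (m + 1)) (s : Bool) (i : ℤ) : cyc m a s i =
    if i = (a : ℕ) + 1 then (if s then (m : ℤ) + 1 else -(m + 1))
    else if i = -((a : ℕ) + 1 : ℤ) then (if s then -((m : ℤ) + 1) else m + 1)
    else if (a : ℕ) + 1 < i ∧ i ≤ m + 1 then i - 1
    else if i < -((a : ℕ) + 1 : ℤ) ∧ -((m : ℤ) + 1) ≤ i then i + 1
    else i := rfl

lemma cyc_symm_apply (m : ℕ) (a : Fin (m + 1)) (s : Bool) (i : ℤ) : (cyc m a s).symm i =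
    if i = (m : ℤ) + 1 then (if s then ((a : ℕ) : ℤ) + 1 else -((a : ℕ) + 1))
    else if i = -((m : ℤ) + 1) then (if s then -(((a : ℕ) : ℤ) + 1) else (a : ℕ) + 1)
    else if ((a : ℕ) : ℤ) + 1 ≤ i ∧ i < m + 1 then i + 1
    else if i ≤ -((a : ℕ) + 1 : ℤ) ∧ -((m : ℤ) + 1) < i then i - 1
    else i := rfl

lemma cyc_signed (m : ℕ) (a : Fin (m + 1)) (s : Bool) : IsSignedPerm (m + 1) (cyc m a s) := by
  have := a.2
  constructor
  · intro i
    cases s <;> simp only [cyc_apply, Bool.false_eq_true, if_true, if_false] <;>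
      split_ifs <;> omega
  · intro i hi
    rw [lt_abs] at hi
    push_cast at hi
    cases s <;> simp only [cyc_apply, Bool.false_eq_true, if_true, if_false] <;>
      split_ifs <;> omega

lemma InXn.mul_cyc {m : ℕ} (hm : 1 ≤ m) {w : Equiv.Perm ℤ} (hw : InXn m w)
    (a : Fin (m + 1)) (s : Bool) : InXn (m + 1) (w * cyc m a s) := by
  have ha := a.2
  refine ⟨⟨fun i => ?_, fun i hi => ?_⟩, ?_⟩
  · rw [Equiv.Perm.mul_apply, (cyc_signed m a s).1, hw.1.1, Equiv.Perm.mul_apply]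
  · rw [Equiv.Perm.mul_apply, (cyc_signed m a s).2 i hi]
    exact hw.1.2 i (by push_cast at hi; omega)
  · change 0 < (cyc m a s).symm (w.symm 1)
    have h1 := hw.2
    have h2 := hw.symm_one_ne hm
    rw [cyc_symm_apply]
    cases s <;> simp only [Bool.false_eq_true, if_true, if_false] <;> split_ifs <;> omega

/-- A signed permutation of length `m + 1` is determined by the insertion data of its largest
letter and by what remains once that letter is removed. -/
lemma cyc_inj {m : ℕ} {w w' : Equiv.Perm ℤ} (hw : InXn m w) (hw' : InXn m w')
    {a a' : Fin (m + 1)} {s s' : Bool} (h : w * cyc m a s = w' * cyc m a' s') :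
    w = w' ∧ a = a' ∧ s = s' := by
  have e : (cyc m a s).symm (w.symm (m + 1)) = (cyc m a' s').symm (w'.symm (m + 1)) := by
    have := congrArg (fun u : Equiv.Perm ℤ => u.symm ((m : ℤ) + 1)) h
    exact this
  have hl : (m : ℤ) < |(m : ℤ) + 1| := by rw [lt_abs]; omega
  rw [hw.1.symm.2 _ hl, hw'.1.symm.2 _ hl, cyc_symm_apply, cyc_symm_apply] at e
  have : a = a' ∧ s = s' := by
    cases s <;> cases s' <;> simp at e ⊢ <;> omega
  obtain ⟨rfl, rfl⟩ := this
  exact ⟨mul_right_cancel h, rfl, rfl⟩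

/-- Every element of `X_{m+1}` arises by inserting `±(m + 1)` into an element of `X_m`. -/
lemma exists_cyc {m : ℕ} {w : Equiv.Perm ℤ} (hw : InXn (m + 1) w) (hm : 1 ≤ m) :
    ∃ w' a s, InXn m w' ∧ w' * cyc m a s = w := by
  set j := w.symm ((m : ℤ) + 1) with hj
  have hwj : w j = (m : ℤ) + 1 := by rw [hj, Equiv.apply_symm_apply]
  have j0 : j ≠ 0 := hw.1.symm.ne_zero (by omega)
  have j1 : |j| ≤ (m : ℤ) + 1 := by
    have := hw.1.symm.abs_le (i := (m : ℤ) + 1) (by rw [abs_le]; push_cast; omega)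
    push_cast at this
    exact this
  rw [abs_le] at j1
  obtain ⟨a, s, hc⟩ : ∃ (a : Fin (m + 1)) (s : Bool), j = if s then ((a : ℕ) : ℤ) + 1
      else -((a : ℕ) + 1 : ℤ) := by
    refine ⟨⟨j.natAbs - 1, by omega⟩, decide (0 < j), ?_⟩
    by_cases h : 0 < j <;> simp [h] <;> omega
  have hcj : (cyc m a s).symm (m + 1) = j := by
    rw [cyc_symm_apply, hc]; simp
  have odd : ∀ i, (w * (cyc m a s).symm) (-i) = -(w * (cyc m a s).symm) i := fun i => by
    rw [Equiv.Perm.mul_apply, (cyc_signed m a s).symm.1, hw.1.1, Equiv.Perm.mul_apply]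
  have top : (w * (cyc m a s).symm) (m + 1) = m + 1 := by
    rw [Equiv.Perm.mul_apply, hcj, hwj]
  refine ⟨w * (cyc m a s).symm, a, s, ⟨⟨odd, fun i hi => ?_⟩, ?_⟩, ?_⟩
  · by_cases h : ((m + 1 : ℕ) : ℤ) < |i|
    · rw [Equiv.Perm.mul_apply, (cyc_signed m a s).symm.2 i h, hw.1.2 i h]
    · push_cast at h
      have : i = m + 1 ∨ i = -(m + 1) := by
        rw [lt_abs] at hi
        rw [lt_abs] at h
        omega
      rcases this with rfl | rfl
      · exact top
      · rw [odd, top]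
  · change 0 < cyc m a s (w.symm 1)
    have h1 := hw.2
    have h2 : w.symm 1 ≠ j := by
      rw [hj]; intro h
      have := w.symm.injective h
      omega
    have h3 : w.symm 1 ≠ -j := by
      rw [hj, ← hw.1.symm_neg]; intro h
      have := w.symm.injective h
      omega
    have h4 := hw.symm_one_ne (by omega)
    push_cast at h4
    rw [hc] at h2 h3
    rw [cyc_apply]
    cases s <;> simp only [Bool.false_eq_true, if_true, if_false] at h2 h3 ⊢ <;>
      split_ifs <;> omega
  · ext i
    simp [Equiv.Perm.mul_apply]

lemma inXn_one {w : Equiv.Perm ℤ} : InXn 1 w ↔ w = 1 := by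
  constructor
  · intro h
    have h1 := h.symm_one_ne le_rfl
    have h2 := h.2
    have h3 : w 1 = 1 := by
      rw [← Equiv.eq_symm_apply]
      push_cast at h1
      omega
    ext i
    change w i = i
    by_cases hi : ((1 : ℕ) : ℤ) < |i|
    · exact h.1.2 i hi
    · rw [lt_abs] at hi
      have : i = 0 ∨ i = 1 ∨ i = -1 := by omega
      rcases this with rfl | rfl | rfl
      · exact h.1.zero
      · exact h3
      · rw [h.1.1, h3]
  · rintro rfl
    exact ⟨⟨fun i => rfl, fun i _ => rfl⟩, one_pos⟩

lemma xn_finite {m : ℕ} (hm : 1 ≤ m) : {w | InXn m w}.Finite := by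
  induction m, hm using Nat.le_induction with
  | base =>
    simp only [inXn_one]
    exact Set.finite_singleton 1
  | succ m hm ih =>
    refine ((ih.prod (Set.finite_univ (α := Fin (m + 1) × Bool))).image
      (fun x => x.1 * cyc m x.2.1 x.2.2)).subset ?_
    intro w hw
    obtain ⟨w', a, s, h1, h2⟩ := exists_cyc hw hm
    exact ⟨(w', a, s), ⟨h1, Set.mem_univ _⟩, h2⟩

/-- The set `X_m` as a finset (for `m ≥ 1`; the value at `m = 0` plays no role). -/
noncomputable def XF (m : ℕ) : Finset (Equiv.Perm ℤ) :=
  if h : {w | InXn m w}.Finite then h.toFinset else ∅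

lemma mem_XF {m : ℕ} (hm : 1 ≤ m) {w : Equiv.Perm ℤ} : w ∈ XF m ↔ InXn m w := by
  simp [XF, xn_finite hm]

/-! ### Big ascents as gaps of a circular word -/

/-- Whether gap `i ∈ {0, …, m}` of the circular word `w_1 ⋯ w_m (-w_m) ⋯ (-w_1)` is a big
ascent; gap `i` lies between the letters `w_i` and `w_{i+1}`, where `w_0 = -w_1` and
`w_{m+1} = -w_m`. -/
def Gap (m : ℕ) (w : Equiv.Perm ℤ) (i : ℕ) : Prop :=
  if i = 0 then 2 ≤ w 1 else if i = m then w m ≤ -2 else Lll (w i) (w (i + 1))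

lemma gap_last {m : ℕ} (w : Equiv.Perm ℤ) {i : ℕ} (h0 : i ≠ 0) (h1 : i = m) :
    Gap m w i ↔ w m ≤ -2 := by
  rw [Gap, if_neg h0, if_pos h1]

lemma gap_mid {m : ℕ} (w : Equiv.Perm ℤ) {i : ℕ} (h0 : i ≠ 0) (h1 : i ≠ m) :
    Gap m w i ↔ Lll (w i) (w (i + 1)) := by
  rw [Gap, if_neg h0, if_neg h1]

lemma basc_eq_sum {m : ℕ} (hm : 1 ≤ m) (w : Equiv.Perm ℤ) :
    basc m w = ∑ i ∈ Finset.range (m + 1), if Gap m w i then 1 else 0 := by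
  rw [basc, ← Finset.card_filter]
  symm
  refine Finset.card_bij (fun i _ => if i = 0 then -1 else (i : ℤ)) ?_ ?_ ?_
  · intro i hi
    obtain ⟨h1, h2⟩ := Finset.mem_filter.mp hi
    rw [Finset.mem_range] at h1
    rw [Gap] at h2
    refine Finset.mem_filter.mpr ⟨?_, ?_⟩
    · simp only [Finset.mem_insert, Finset.mem_Icc]
      split_ifs <;> omega
    · by_cases h0 : i = 0
      · simpa [h0] using h2
      · have : (i : ℤ) ≠ -1 := by omega
        simpa [h0, this] using h2
  · intro i _ j _ h
    split_ifs at h <;> omega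
  · intro b hb
    obtain ⟨h1, h2⟩ := Finset.mem_filter.mp hb
    simp only [Finset.mem_insert, Finset.mem_Icc] at h1
    by_cases h0 : b = -1
    · refine ⟨0, Finset.mem_filter.mpr ⟨by simp, ?_⟩, by simp [h0]⟩
      simpa [h0, Gap] using h2
    · have hb : ((b.toNat : ℕ) : ℤ) = b := by omega
      have h3 : b.toNat ≠ 0 := by omega
      have h4 : b.toNat = m ↔ b = m := by omega
      refine ⟨b.toNat, Finset.mem_filter.mpr ⟨Finset.mem_range.mpr (by omega), ?_⟩,
        by simp only [h3, hb, if_false]⟩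
      rw [Gap]
      by_cases h5 : b = m
      · rw [if_neg h3, if_pos (h4.mpr h5)]
        simpa [h0, h5, show (m : ℤ) ≠ -1 by omega] using h2
      · simpa only [h3, h4, h0, hb, h5, if_false] using h2

/-! ### Effect of an insertion on the big ascent number -/

/-- The insertion `(a, s)` is exceptional for `w` when it puts `m + 1` right behind the letter
`m`, or `-(m + 1)` right before the letter `-m`. -/
def Exc (m : ℕ) (w : Equiv.Perm ℤ) (a : Fin (m + 1)) (s : Bool) : Prop :=
  if s then 1 ≤ (a : ℕ) ∧ w (a : ℕ) = m else (a : ℕ) < m ∧ w ((a : ℕ) + 1) = -m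

/-- Inserting a letter into gap `a` destroys a big ascent there, if there is one, and creates
exactly one new big ascent unless the insertion is exceptional. -/
lemma basc_mul_cyc {m : ℕ} (hm : 1 ≤ m) {w : Equiv.Perm ℤ} (hw : InXn m w)
    (a : Fin (m + 1)) (s : Bool) :
    basc (m + 1) (w * cyc m a s) + (if Gap m w a then 1 else 0)
      = basc m w + (if Exc m w a s then 0 else 1) := by
  have ha := a.2
  obtain ⟨d, hd⟩ : ∃ d, m = a + d := ⟨m - a, by omega⟩
  set u := w * cyc m a s with hu
  -- the letters of the new word
  have u1 : ∀ i : ℤ, 1 ≤ i → i ≤ (a : ℕ) → u i = w i := fun i h1 h2 => by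
    rw [hu, Equiv.Perm.mul_apply, cyc_apply]
    congr 1
    split_ifs <;> omega
  have u2 : ∀ i : ℤ, (a : ℕ) + 2 ≤ i → i ≤ m + 1 → u i = w (i - 1) := fun i h1 h2 => by
    rw [hu, Equiv.Perm.mul_apply, cyc_apply]
    congr 1
    split_ifs <;> omega
  have hl : (m : ℤ) < |(m : ℤ) + 1| := by rw [lt_abs]; omega
  have u3 : u ((a : ℕ) + 1) = if s then (m : ℤ) + 1 else -(m + 1) := by
    rw [hu, Equiv.Perm.mul_apply, cyc_apply, if_pos rfl]
    split_ifs
    · exact hw.1.2 _ hl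
    · exact hw.1.2 _ (by rwa [abs_neg])
  have low : ∀ i < (a : ℕ), (Gap (m + 1) u i ↔ Gap m w i) := fun i hi => by
    rw [Gap, Gap]
    by_cases h0 : i = 0
    · rw [if_pos h0, if_pos h0, u1 1 le_rfl (by omega)]
    · rw [if_neg h0, if_neg h0, if_neg (by omega), if_neg (by omega),
        u1 _ (by omega) (by omega), u1 _ (by omega) (by omega)]
  have high : ∀ k < d, (Gap (m + 1) u ((a : ℕ) + 2 + k) ↔ Gap m w ((a : ℕ) + 1 + k)) :=
    fun k hk => by
    by_cases h0 : (a : ℕ) + 1 + k = m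
    · rw [gap_last u (by omega) (by omega), gap_last w (by omega) h0, u2 _ (by push_cast; omega) (by push_cast; omega)]
      push_cast
      rw [add_sub_cancel_right]
    · rw [gap_mid u (by omega) (by omega), gap_mid w (by omega) h0,
        u2 _ (by push_cast; omega) (by push_cast; omega),
        u2 _ (by push_cast; omega) (by push_cast; omega)]
      push_cast
      rw [add_sub_cancel_right, show (((a : ℕ) : ℤ) + 2 + k - 1) = (a : ℕ) + 1 + k by ring,
        show (((a : ℕ) : ℤ) + 2 + k) = (a : ℕ) + 1 + k + 1 by ring]
  -- exactly one of the two new gaps is a big ascent, or none for an exceptional insertion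
  have mid : (if Gap (m + 1) u a then 1 else 0) + (if Gap (m + 1) u ((a : ℕ) + 1) then 1 else 0)
      = if Exc m w a s then 0 else 1 := by
    have bd : ∀ i : ℤ, 1 ≤ i → i ≤ m → -(m : ℤ) ≤ w i ∧ w i ≤ m := fun i h1 h2 =>
      abs_le.mp (hw.1.abs_le (abs_le.mpr ⟨by omega, h2⟩))
    have e1 : Gap (m + 1) u a ↔ (s = true ∧ ¬ Exc m w a s) := by
      rw [Gap, Exc]
      by_cases h0 : (a : ℕ) = 0
      · rw [h0] at u3
        simp only [Nat.cast_zero, zero_add] at u3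
        rw [if_pos h0, u3, h0]
        cases s <;> simp <;> omega
      · have := bd (a : ℕ) (by omega) (by omega)
        rw [if_neg h0, if_neg (by omega), u1 _ (by omega) le_rfl, u3, lll_iff]
        cases s <;> simp <;> omega
    have e2 : Gap (m + 1) u ((a : ℕ) + 1) ↔ (s = false ∧ ¬ Exc m w a s) := by
      rw [Exc]
      by_cases h0 : (a : ℕ) = m
      · rw [gap_last u (by omega) (by omega)]
        rw [h0] at u3
        push_cast
        rw [u3]
        cases s <;> simp <;> omega
      · have := bd ((a : ℕ) + 1) (by omega) (by omega)
        rw [gap_mid u (by omega) (by omega)]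
        push_cast
        rw [u2 ((a : ℕ) + 1 + 1) (by omega) (by omega), add_sub_cancel_right, u3, lll_iff]
        cases s <;> simp <;> omega
    simp only [e1, e2]
    by_cases h : Exc m w a s <;> cases s <;> simp [h]
  rw [basc_eq_sum (by omega), basc_eq_sum hm, ← mid,
    show m + 1 + 1 = (a : ℕ) + 2 + d by omega,
    show Finset.range (m + 1) = Finset.range ((a : ℕ) + 1 + d) by congr 1; omega,
    Finset.sum_range_add _ ((a : ℕ) + 2), Finset.sum_range_add _ ((a : ℕ) + 1),
    Finset.sum_range_succ _ ((a : ℕ) + 1), Finset.sum_range_succ _ (a : ℕ),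
    Finset.sum_range_succ _ (a : ℕ)]
  have s1 : ∑ i ∈ Finset.range a, (if Gap (m + 1) u i then 1 else 0)
      = ∑ i ∈ Finset.range a, (if Gap m w i then 1 else 0) :=
    Finset.sum_congr rfl fun i hi => by simp only [low i (Finset.mem_range.mp hi)]
  have s2 : ∑ i ∈ Finset.range d, (if Gap (m + 1) u ((a : ℕ) + 2 + i) then 1 else 0)
      = ∑ i ∈ Finset.range d, (if Gap m w ((a : ℕ) + 1 + i) then 1 else 0) :=
    Finset.sum_congr rfl fun i hi => by simp only [high i (Finset.mem_range.mp hi)]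
  rw [s1, s2]
  ring

lemma exc_not_gap {m : ℕ} (hm : 1 ≤ m) {w : Equiv.Perm ℤ} (hw : InXn m w)
    {a : Fin (m + 1)} {s : Bool} (h : Exc m w a s) : ¬ Gap m w a := by
  have ha := a.2
  have bd : ∀ i : ℤ, 1 ≤ i → i ≤ m → -(m : ℤ) ≤ w i ∧ w i ≤ m := fun i h1 h2 =>
    abs_le.mp (hw.1.abs_le (abs_le.mpr ⟨by omega, h2⟩))
  rw [Gap]
  rw [Exc] at h
  cases s
  · simp only [Bool.false_eq_true, if_false] at h
    obtain ⟨h1, h2⟩ := h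
    rw [if_neg (show (a : ℕ) ≠ m by omega)]
    split_ifs with h0
    · rw [h0] at h2
      simp only [Nat.cast_zero, zero_add] at h2
      omega
    · have := bd (a : ℕ) (by omega) (by omega)
      rw [h2, lll_iff]
      omega
  · simp only [if_true] at h
    obtain ⟨h1, h2⟩ := h
    rw [if_neg (by omega)]
    split_ifs with h0
    · rw [h0] at h2
      omega
    · have := bd ((a : ℕ) + 1) (by omega) (by omega)
      rw [h2, lll_iff]
      omega

/-- There is exactly one exceptional insertion, determined by the position of `±m` in `w`. -/
lemma exists_exc {m : ℕ} (hm : 1 ≤ m) {w : Equiv.Perm ℤ} (hw : InXn m w) :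
    ∃ e : Fin (m + 1) × Bool, ∀ x : Fin (m + 1) × Bool, Exc m w x.1 x.2 ↔ x = e := by
  set p := w.symm m with hp
  have p0 : p ≠ 0 := hw.1.symm.ne_zero (by omega)
  have p1 : -(m : ℤ) ≤ p ∧ p ≤ m := abs_le.mp (hw.1.symm.abs_le (by simp))
  have eq1 : ∀ i : ℤ, w i = m ↔ i = p := fun i => by rw [hp, Equiv.eq_symm_apply]
  have eq2 : ∀ i : ℤ, w i = -m ↔ i = -p := fun i => by
    rw [hp, ← hw.1.symm_neg, Equiv.eq_symm_apply]
  by_cases h : 0 < p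
  · refine ⟨(⟨p.toNat, by omega⟩, true), ?_⟩
    rintro ⟨a, s⟩
    simp only [Exc, eq1, eq2, Prod.mk.injEq, Fin.ext_iff]
    cases s <;> simp <;> omega
  · refine ⟨(⟨(-p).toNat - 1, by omega⟩, false), ?_⟩
    rintro ⟨a, s⟩
    simp only [Exc, eq1, eq2, Prod.mk.injEq, Fin.ext_iff]
    cases s <;> simp <;> omega

/-! ### The recurrence for the generating polynomial -/

open Polynomial in
/-- The `2 (m + 1)` insertions into a `w` with `k` big ascents contribute
`(2 k + 1) t ^ k + (2 (m - k) + 1) t ^ (k + 1)`. -/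
lemma sum_insert {m : ℕ} (hm : 1 ≤ m) {w : Equiv.Perm ℤ} (hw : InXn m w) :
    ∑ x : Fin (m + 1) × Bool, (X : ℤ[X]) ^ basc (m + 1) (w * cyc m x.1 x.2)
      = (1 + (2 * (m : ℤ[X]) + 1) * X) * X ^ basc m w
        + 2 * X * (1 - X) * derivative (X ^ basc m w) := by
  obtain ⟨e, he⟩ := exists_exc hm hw
  set k := basc m w with hk
  have key : ∀ x : Fin (m + 1) × Bool, (X : ℤ[X]) ^ basc (m + 1) (w * cyc m x.1 x.2)
      = X ^ (k + 1) + (if Gap m w x.1 then 1 else 0) * (X ^ k - X ^ (k + 1))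
        + (if x = e then X ^ k - X ^ (k + 1) else 0) := by
    intro x
    have h := basc_mul_cyc hm hw x.1 x.2
    rw [← hk] at h
    by_cases hx : x = e
    · have h1 := (he x).mpr hx
      have h2 := exc_not_gap hm hw h1
      rw [if_neg h2, if_pos h1] at h
      rw [if_neg h2, if_pos hx, show basc (m + 1) (w * cyc m x.1 x.2) = k by omega]
      ring
    · have h1 := (he x).not.mpr hx
      rw [if_neg h1] at h
      rw [if_neg hx]
      split_ifs at h ⊢ with h2
      · rw [show basc (m + 1) (w * cyc m x.1 x.2) = k by omega]
        ring
      · rw [show basc (m + 1) (w * cyc m x.1 x.2) = k + 1 by omega]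
        ring
  have hc : ∑ a : Fin (m + 1), (if Gap m w a then (1 : ℤ[X]) else 0) = (k : ℤ[X]) := by
    rw [Fin.sum_univ_eq_sum_range (fun i => if Gap m w i then (1 : ℤ[X]) else 0), hk,
      basc_eq_sum hm]
    push_cast
    rfl
  have hd : (X : ℤ[X]) * derivative (X ^ k) = (k : ℤ[X]) * X ^ k := by
    rw [derivative_X_pow]
    cases k with
    | zero => simp
    | succ k => simp; ring
  have hc2 : ∑ x : Fin (m + 1) × Bool, (if Gap m w x.1 then (1 : ℤ[X]) else 0)
      = 2 * (k : ℤ[X]) := by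
    rw [← hc, Finset.mul_sum, Fintype.sum_prod_type]
    exact Finset.sum_congr rfl fun a _ => by rw [Fintype.sum_bool, two_mul]
  rw [Finset.sum_congr rfl fun x _ => key x, Finset.sum_add_distrib, Finset.sum_add_distrib,
    Finset.sum_ite_eq' Finset.univ e, if_pos (Finset.mem_univ e), ← Finset.sum_mul,
    hc2]
  simp only [Finset.sum_const, Finset.card_univ, Fintype.card_bool, Fintype.card_prod,
    Fintype.card_fin, nsmul_eq_mul]
  push_cast
  linear_combination (-2 : ℤ[X]) * (1 - X) * hd

open Polynomial in
lemma PsiC_eq_sum {m : ℕ} (hm : 1 ≤ m) : PsiC m = ∑ w ∈ XF m, (X : ℤ[X]) ^ basc m w := by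
  have hN : ∀ k, psiN m k = ((XF m).filter fun w => basc m w = k).card := fun k => by
    rw [psiN, ← Set.ncard_coe_finset]
    congr 1
    ext w
    simp [mem_XF hm]
  rw [Finset.sum_comp (fun k => (X : ℤ[X]) ^ k) (basc m), PsiC,
    finsum_eq_sum_of_support_subset (s := (XF m).image (basc m))]
  · refine Finset.sum_congr rfl fun k _ => ?_
    rw [hN, nsmul_eq_mul]
  · intro k hk
    simp only [Function.mem_support, hN] at hk
    have : ((XF m).filter fun w => basc m w = k).card ≠ 0 := fun h => hk (by rw [h]; simp)
    obtain ⟨w, hw⟩ := Finset.card_ne_zero.mp this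
    rw [Finset.mem_filter] at hw
    exact Finset.mem_coe.mpr (Finset.mem_image.mpr ⟨w, hw.1, hw.2⟩)

open Polynomial in
/-- The recurrence obtained by summing the contributions of all insertions over `X_m`. -/
lemma PsiC_succ {m : ℕ} (hm : 1 ≤ m) :
    PsiC (m + 1) = (1 + (2 * (m : ℤ[X]) + 1) * X) * PsiC m + 2 * X * (1 - X) * derivative (PsiC m) := by
  rw [PsiC_eq_sum hm, PsiC_eq_sum (by omega), derivative_sum, Finset.mul_sum, Finset.mul_sum,
    ← Finset.sum_add_distrib, ← Finset.sum_congr rfl fun w hw => sum_insert hm ((mem_XF hm).mp hw),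
    ← Finset.sum_product']
  symm
  refine Finset.sum_bij (fun x _ => x.1 * cyc m x.2.1 x.2.2) ?_ ?_ ?_ ?_
  · rintro ⟨w, x⟩ h
    rw [Finset.mem_product, mem_XF hm] at h
    exact (mem_XF (by omega)).mpr (h.1.mul_cyc hm _ _)
  · rintro ⟨w, a, s⟩ h ⟨w', a', s'⟩ h' e
    rw [Finset.mem_product, mem_XF hm] at h h'
    obtain ⟨rfl, rfl, rfl⟩ := cyc_inj h.1 h'.1 e
    rfl
  · intro u hu
    rw [mem_XF (by omega)] at hu
    obtain ⟨w, a, s, h1, h2⟩ := exists_cyc hu hm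
    exact ⟨(w, a, s), Finset.mem_product.mpr ⟨(mem_XF hm).mpr h1, Finset.mem_univ _⟩, h2⟩
  · intro x _
    rfl

open Polynomial in
lemma PsiC_one : PsiC 1 = 1 := by
  have h : XF 1 = {1} := by
    ext w
    rw [mem_XF le_rfl, inXn_one, Finset.mem_singleton]
  rw [PsiC_eq_sum le_rfl, h, Finset.sum_singleton, basc_eq_sum le_rfl,
    Finset.sum_range_succ, Finset.sum_range_one]
  simp [Gap]

/-! ### Location of the roots -/

open Polynomial in
lemma PsiC_pos {m : ℕ} (hm : 1 ≤ m) {x : ℝ} (hx : 0 < x) : 0 < aeval x (PsiC m) := by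
  rw [PsiC_eq_sum hm, map_sum]
  refine Finset.sum_pos (fun w _ => by simpa using pow_pos hx _) ⟨1, (mem_XF hm).mpr ?_⟩
  exact ⟨⟨fun i => rfl, fun i _ => rfl⟩, one_pos⟩

open Polynomial in
/-- All complex roots are real and at most `1`; the bound is what makes the induction work, since
then `1 - r ≥ 0` for every root `r` in the logarithmic derivative. -/
lemma PsiC_roots {m : ℕ} (hm : 1 ≤ m) :
    ∀ z : ℂ, aeval z (PsiC m) = 0 → z.im = 0 ∧ z.re ≤ 1 := by
  induction m, hm using Nat.le_induction with
  | base => simp [PsiC_one]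
  | succ m hm ih =>
    intro z hz
    have him : z.im = 0 := by
      by_contra hz0
      set P : ℂ[X] := (PsiC m).map (algebraMap ℤ ℂ) with hP
      have hev : ∀ y, P.eval y = aeval y (PsiC m) := fun y => by
        rw [hP, eval_map_algebraMap]
      have hPz : P.eval z ≠ 0 := fun h => hz0 (ih z ((hev z).symm.trans h)).1
      have hder : P.derivative.eval z = aeval z (derivative (PsiC m)) := by
        rw [hP, derivative_map, eval_map_algebraMap]
      have hsp := IsAlgClosed.splits P
      have hlog := hsp.eval_derivative_div_eval_of_ne_zero hPz
      have hrec : (1 + (2 * m + 1) * z) * P.eval z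
          + 2 * z * (1 - z) * P.derivative.eval z = 0 := by
        have h2 : aeval z (2 : ℤ[X]) = 2 := map_ofNat _ 2
        rw [hev, hder, ← hz, PsiC_succ hm]
        simp [h2]
      have hzne : z ≠ 0 := fun h => hz0 (by simp [h])
      have hroot : ∀ r ∈ P.roots, r.im = 0 ∧ r.re ≤ 1 := fun r hr =>
        ih r ((hev r).symm.trans (isRoot_of_mem_roots hr))
      have hrz : ∀ r ∈ P.roots, z - r ≠ 0 := fun r hr h => by
        rw [sub_eq_zero] at h
        exact hz0 (h ▸ (hroot r hr).1)
      -- multiplying by `1 - z` moves the pole at `1` away: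
      -- `∑ (1 - z) / (z - r) = ∑ (1 - r) / (z - r) - #roots`
      have hsum : (1 - z) * (P.derivative.eval z / P.eval z)
          = (P.roots.map fun r => (1 - r) / (z - r)).sum - P.roots.card := by
        rw [hlog, ← Multiset.sum_map_mul_left]
        have : P.roots.map (fun r => (1 - z) * (1 / (z - r)))
            = P.roots.map (fun r => (1 - r) / (z - r) - 1) :=
          Multiset.map_congr rfl fun r hr => by
            have := hrz r hr
            field_simp
            ring
        rw [this, Multiset.sum_map_sub]
        simp
      have hmain : (P.roots.map fun r => (1 - r) / (z - r)).sum + 1 / (2 * z)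
          + ((m + 1 / 2 - P.roots.card : ℝ) : ℂ) = 0 := by
        have h1 : (1 + (2 * m + 1) * z) + 2 * z * ((1 - z) *
            (P.derivative.eval z / P.eval z)) = 0 := by
          field_simp
          linear_combination hrec
        rw [hsum] at h1
        push_cast
        field_simp
        linear_combination h1
      -- The imaginary parts of `1 / (2 z)` and of all `(1 - r) / (z - r)` have the sign opposite
      -- to that of `z.im`, the first one strictly, while the remaining term is real.
      have hns : 0 < Complex.normSq z := Complex.normSq_pos.mpr hzne
      have him2 := congrArg (fun y : ℂ => z.im * y.im) hmain
      have hterm : ∀ r ∈ P.roots, z.im * ((1 - r) / (z - r)).im ≤ 0 := fun r hr => by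
        obtain ⟨h1, h2⟩ := hroot r hr
        have h3 : ((1 - r) / (z - r)).im
            = -((1 - r.re) * z.im / Complex.normSq (z - r)) := by
          rw [Complex.div_im]
          simp [h1]
        rw [h3]
        have h4 : 0 ≤ (1 - r.re) * (z.im * z.im) / Complex.normSq (z - r) :=
          div_nonneg (mul_nonneg (by linarith) (mul_self_nonneg _)) (Complex.normSq_nonneg _)
        have h5 : z.im * -((1 - r.re) * z.im / Complex.normSq (z - r))
          = -((1 - r.re) * (z.im * z.im) / Complex.normSq (z - r)) := by ring
        rw [h5]
        linarith
      have hS : z.im * (P.roots.map fun r => (1 - r) / (z - r)).sum.im ≤ 0 := by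
        have : (P.roots.map fun r => (1 - r) / (z - r)).sum.im
            = (P.roots.map fun r => ((1 - r) / (z - r)).im).sum := by
          have := map_multiset_sum Complex.imAddGroupHom
            (P.roots.map fun r => (1 - r) / (z - r))
          simpa using this
        rw [this, ← Multiset.sum_map_mul_left]
        rw [← neg_nonneg, ← Multiset.sum_map_neg]
        refine Multiset.sum_nonneg fun y hy => ?_
        obtain ⟨r, hr, rfl⟩ := Multiset.mem_map.mp hy
        exact neg_nonneg.mpr (hterm r hr)
      have hl : (1 / (2 * z)).im = - (z.im / (2 * Complex.normSq z)) := by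
        rw [one_div, Complex.inv_im]
        simp
        field_simp
      have hpos : 0 < z.im * (z.im / (2 * Complex.normSq z)) := by
        rw [← mul_div_assoc]
        exact div_pos (mul_self_pos.mpr hz0) (by linarith)
      simp only [Complex.add_im, Complex.ofReal_im, Complex.zero_im, hl] at him2
      nlinarith
    refine ⟨him, ?_⟩
    by_contra hre
    have hzr : z = ((z.re : ℝ) : ℂ) := Complex.ext rfl (by simp [him])
    have hp := PsiC_pos (m := m + 1) (by omega) (x := z.re) (by linarith)
    rw [hzr, ← Complex.coe_algebraMap, aeval_algebraMap_apply] at hz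
    simp at hz
    exact absurd hz (ne_of_gt hp)

/-- For every `n ≥ 1`, the polynomial `Ψ_{C_n}(t)` has only real
roots: every complex root of `Ψ_{C_n}` is real. -/
theorem PsiC_real_rooted (n : ℕ) (hn : 1 ≤ n) :
    ∀ z : ℂ, Polynomial.aeval z (PsiC n) = 0 → z.im = 0 :=
  fun z hz => (PsiC_roots hn z hz).1
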